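/- Suppose A : [0,∞) → M_n(ℂ) is differentiable and satisfies A'(t) = A(t)·[A(t), A(t)*] for all t ≥ 0. Then A(t) → 0 as t → ∞ if and only if A(0) is nilpotent. -/

import Mathlib

/-!
STATEMENT 10: If A : [0,∞) → M_n(ℂ) solves A' = A[A,A*], then A(t) → 0 as t → ∞
iff A(0) is nilpotent.
-/

open Matrix Set Filter

attribute [local instance] Matrix.frobeniusSeminormedAddCommGroup
  Matrix.frobeniusNormedAddCommGroup Matrix.frobeniusNormedSpace

section FrobeniusRing

open scoped ComplexOrder

attribute [local instance] Matrix.frobeniusNormedRing Matrix.frobeniusNormedAlgebra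

variable {n : ℕ}

theorem Matrix.frobenius_norm_sq_eq_re_trace (M : Matrix (Fin n) (Fin n) ℂ) :
    ‖M‖ ^ 2 = (Mᴴ * M).trace.re := by
  rw [Matrix.frobenius_norm_def, ← Real.sqrt_eq_rpow, Real.sq_sqrt (by positivity),
    Finset.sum_comm]
  simp only [Matrix.trace, Matrix.diag_apply, Matrix.mul_apply, Matrix.conjTranspose_apply,
    Complex.re_sum]
  refine Finset.sum_congr rfl fun i _ => Finset.sum_congr rfl fun j _ => ?_
  rw [← Complex.ofReal_re (‖M j i‖ ^ (2 : ℝ)), Complex.star_def, Complex.conj_mul']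
  norm_cast

theorem Matrix.IsHermitian.eq_zero_of_isNilpotent {M : Matrix (Fin n) (Fin n) ℂ}
    (hM : M.IsHermitian) (h : IsNilpotent M) : M = 0 := by
  obtain ⟨k, hk⟩ := h
  have descent : ∀ j : ℕ, M ^ 2 ^ j = 0 → M = 0 := by
    intro j
    induction j with
    | zero => simp
    | succ j ih =>
      intro h
      refine ih (Matrix.conjTranspose_mul_self_eq_zero.mp ?_)
      rw [Matrix.conjTranspose_pow, hM.eq, ← pow_add, ← two_mul, ← pow_succ', h]
  exact descent k (pow_eq_zero_of_le Nat.lt_two_pow_self.le hk)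

theorem Matrix.eq_zero_of_isNilpotent_of_commute_conjTranspose {M : Matrix (Fin n) (Fin n) ℂ}
    (hc : Commute M Mᴴ) (h : IsNilpotent M) : M = 0 :=
  Matrix.conjTranspose_mul_self_eq_zero.mp <|
    (Matrix.isHermitian_conjTranspose_mul_self M).eq_zero_of_isNilpotent
      (hc.symm.isNilpotent_mul_left h)

/-- The norm of the self-commutator is bounded below by a multiple of the squared norm
on nilpotent matrices of bounded index. -/
theorem Matrix.exists_mul_norm_sq_le_norm_selfCommutator (k : ℕ) :
    ∃ c > 0, ∀ M : Matrix (Fin n) (Fin n) ℂ, M ^ k = 0 →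
      c * ‖M‖ ^ 2 ≤ ‖M * Mᴴ - Mᴴ * M‖ := by
  let S : Set (Matrix (Fin n) (Fin n) ℂ) := Metric.sphere 0 1 ∩ {M | M ^ k = 0}
  have : ProperSpace (Matrix (Fin n) (Fin n) ℂ) := FiniteDimensional.proper ℂ _
  have hS : IsCompact S :=
    (isCompact_sphere _ _).inter_right (isClosed_eq (continuous_pow k) continuous_const)
  have hcont : Continuous fun M : Matrix (Fin n) (Fin n) ℂ => ‖M * Mᴴ - Mᴴ * M‖ := by
    have : Continuous fun M : Matrix (Fin n) (Fin n) ℂ => Mᴴ := continuous_id.matrix_conjTranspose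
    fun_prop
  have hpos : ∀ M ∈ S, 0 < ‖M * Mᴴ - Mᴴ * M‖ := by
    rintro M ⟨hM, hk⟩
    refine norm_pos_iff.mpr fun h => ?_
    have h0 := Matrix.eq_zero_of_isNilpotent_of_commute_conjTranspose (sub_eq_zero.mp h) ⟨k, hk⟩
    simp [h0] at hM
  obtain ⟨c, hc, hle⟩ := hS.exists_forall_le' hcont.continuousOn hpos
  refine ⟨c, hc, fun M hk => ?_⟩
  rcases eq_or_ne M 0 with rfl | hM
  · simp
  have hn : 0 < ‖M‖ := norm_pos_iff.mpr hM
  have h := hle ((‖M‖⁻¹ : ℝ) • M) ⟨by simp [norm_smul, hn.ne'], by simp [smul_pow, hk]⟩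
  simp only [Matrix.conjTranspose_smul, star_trivial, smul_mul_smul_comm, ← smul_sub,
    norm_smul] at h
  rw [Real.norm_of_nonneg (by positivity)] at h
  calc c * ‖M‖ ^ 2 ≤ (‖M‖⁻¹ * ‖M‖⁻¹ * ‖M * Mᴴ - Mᴴ * M‖) * ‖M‖ ^ 2 := by gcongr
    _ = _ := by field_simp

variable {A : ℝ → Matrix (Fin n) (Fin n) ℂ}

theorem hasDerivWithinAt_norm_sq_of_selfCommutator_flow
    (hA : ∀ t ∈ Ici (0 : ℝ),
      HasDerivWithinAt A (A t * (A t * (A t)ᴴ - (A t)ᴴ * A t)) (Ici 0) t)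
    {t : ℝ} (ht : t ∈ Ici (0 : ℝ)) :
    HasDerivWithinAt (fun t => ‖A t‖ ^ 2) (-‖A t * (A t)ᴴ - (A t)ᴴ * A t‖ ^ 2) (Ici 0) t := by
  have hd := hA t ht
  have hstar : HasDerivWithinAt (fun t => (A t)ᴴ) (A t * (A t * (A t)ᴴ - (A t)ᴴ * A t))ᴴ
    (Ici 0) t := hd.star
  have hmul := hstar.mul hd
  let φ : Matrix (Fin n) (Fin n) ℂ →L[ℝ] ℝ :=
    LinearMap.toContinuousLinearMap (Complex.reLm ∘ₗ Matrix.traceLinearMap (Fin n) ℝ ℂ)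
  have hφ := φ.hasFDerivAt.comp_hasDerivWithinAt t hmul
  simp only [Matrix.frobenius_norm_sq_eq_re_trace]
  refine HasDerivWithinAt.congr_deriv hφ ?_
  change Complex.re (Matrix.trace (n := Fin n) (R := ℂ) _) = _
  generalize A t = M
  rw [← Complex.neg_re, ← Matrix.trace_neg]
  have h_mixed : (M * Mᴴ * (Mᴴ * M)).trace = (Mᴴ * M * (M * Mᴴ)).trace := Matrix.trace_mul_comm _ _
  have h_square : (M * Mᴴ * (M * Mᴴ)).trace = (Mᴴ * M * (Mᴴ * M)).trace := by
    rw [Matrix.mul_assoc, Matrix.trace_mul_comm]; simp only [Matrix.mul_assoc]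
  congr 1
  simp only [Matrix.conjTranspose_mul, Matrix.conjTranspose_sub,
    Matrix.conjTranspose_conjTranspose, Matrix.mul_sub, Matrix.sub_mul, Matrix.trace_add,
    Matrix.trace_neg, Matrix.trace_sub, Matrix.mul_assoc] at h_mixed h_square ⊢
  rw [h_mixed, h_square]
  ring

theorem antitoneOn_norm_sq_of_selfCommutator_flow
    (hA : ∀ t ∈ Ici (0 : ℝ),
      HasDerivWithinAt A (A t * (A t * (A t)ᴴ - (A t)ᴴ * A t)) (Ici 0) t) :
    AntitoneOn (fun t => ‖A t‖ ^ 2) (Ici 0) :=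
  antitoneOn_of_hasDerivWithinAt_nonpos (convex_Ici 0)
    (fun _ ht => (hasDerivWithinAt_norm_sq_of_selfCommutator_flow hA ht).continuousWithinAt)
    (fun _ ht => (hasDerivWithinAt_norm_sq_of_selfCommutator_flow hA
      (interior_subset ht)).mono interior_subset)
    fun _ _ => neg_nonpos.mpr (sq_nonneg _)

/-- Every polynomial in `A` satisfies the same Lax equation as `A`. -/
theorem hasDerivWithinAt_aeval_of_selfCommutator_flow
    (hA : ∀ t ∈ Ici (0 : ℝ),
      HasDerivWithinAt A (A t * (A t * (A t)ᴴ - (A t)ᴴ * A t)) (Ici 0) t)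
    (p : Polynomial ℂ) {t : ℝ} (ht : t ∈ Ici (0 : ℝ)) :
    HasDerivWithinAt (fun t => Polynomial.aeval (A t) p)
      (Polynomial.aeval (A t) p * (A t * (A t)ᴴ) - (A t * (A t)ᴴ) * Polynomial.aeval (A t) p)
      (Ici 0) t := by
  induction p using Polynomial.induction_on with
  | C a =>
    simp only [Polynomial.aeval_C, Algebra.commutes, sub_self]
    exact hasDerivWithinAt_const _ _ _
  | add p q hp hq =>
    simp only [map_add]
    refine HasDerivWithinAt.congr_deriv (hp.add hq) ?_
    noncomm_ring
  | monomial k a hk =>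
    simp only [pow_succ, ← mul_assoc, map_mul _ _ (Polynomial.X : Polynomial ℂ),
      Polynomial.aeval_X]
    refine HasDerivWithinAt.congr_deriv (hk.mul (hA t ht)) ?_
    noncomm_ring

/-- Vanishing of a polynomial expression in `A` propagates both forwards and backwards. -/
theorem aeval_eq_zero_iff_of_selfCommutator_flow
    (hA : ∀ t ∈ Ici (0 : ℝ),
      HasDerivWithinAt A (A t * (A t * (A t)ᴴ - (A t)ᴴ * A t)) (Ici 0) t)
    (p : Polynomial ℂ) {T : ℝ} (hT : 0 ≤ T) :
    Polynomial.aeval (A T) p = 0 ↔ Polynomial.aeval (A 0) p = 0 := by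
  let v : ℝ → Matrix (Fin n) (Fin n) ℂ → Matrix (Fin n) (Fin n) ℂ :=
    fun t M => M * (A t * (A t)ᴴ) - (A t * (A t)ᴴ) * M
  have hderiv := fun t (ht : t ∈ Ici (0 : ℝ)) =>
    hasDerivWithinAt_aeval_of_selfCommutator_flow hA p ht
  have hv : ∀ t ∈ Ici (0 : ℝ), LipschitzOnWith (2 * ‖A 0‖₊ ^ 2) (v t) univ := by
    intro t ht
    refine LipschitzOnWith.of_dist_le_mul fun M _ N _ => ?_
    have hP : ‖A t * (A t)ᴴ‖ ≤ ‖A 0‖ ^ 2 := calc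
      _ ≤ ‖A t‖ * ‖(A t)ᴴ‖ := norm_mul_le _ _
      _ = ‖A t‖ ^ 2 := by rw [Matrix.frobenius_norm_conjTranspose, sq]
      _ ≤ _ := antitoneOn_norm_sq_of_selfCommutator_flow hA self_mem_Ici ht ht
    have hsub : v t M - v t N =
        (M - N) * (A t * (A t)ᴴ) - (A t * (A t)ᴴ) * (M - N) := by
      simp only [v]; noncomm_ring
    rw [dist_eq_norm, dist_eq_norm, hsub]
    calc _ ≤ ‖M - N‖ * ‖A t * (A t)ᴴ‖ + ‖A t * (A t)ᴴ‖ * ‖M - N‖ :=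
          (norm_sub_le _ _).trans (add_le_add (norm_mul_le _ _) (norm_mul_le _ _))
      _ ≤ ‖M - N‖ * ‖A 0‖ ^ 2 + ‖A 0‖ ^ 2 * ‖M - N‖ := by gcongr
      _ = _ := by push_cast; ring
  have hcont : ContinuousOn (fun t => Polynomial.aeval (A t) p) (Icc 0 T) :=
    fun t ht => ((hderiv t ht.1).continuousWithinAt).mono Icc_subset_Ici_self
  have hzero : ∀ (t : ℝ) (s : Set ℝ),
      HasDerivWithinAt (fun _ : ℝ => (0 : Matrix (Fin n) (Fin n) ℂ)) (v t 0) s t := by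
    intro t s
    have hv0 : v t 0 = 0 := by simp [v]
    rw [hv0]
    exact hasDerivWithinAt_const t s 0
  constructor
  · intro h
    exact ODE_solution_unique_of_mem_Icc_left (v := v) (s := fun _ => univ)
      (fun t ht => hv t ht.1.le) hcont
      (fun t ht => ((hderiv t ht.1.le).hasDerivAt (Ici_mem_nhds ht.1)).hasDerivWithinAt)
      (fun _ _ => mem_univ _) continuousOn_const (fun t _ => hzero t _)
      (fun _ _ => mem_univ _) h (left_mem_Icc.mpr hT)
  · intro h
    exact ODE_solution_unique_of_mem_Icc_right (v := v) (s := fun _ => univ)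
      (fun t ht => hv t ht.1) hcont
      (fun t ht => (hderiv t ht.1).mono (Ici_subset_Ici.mpr ht.1))
      (fun _ _ => mem_univ _) continuousOn_const (fun t _ => hzero t _)
      (fun _ _ => mem_univ _) h (right_mem_Icc.mpr hT)

theorem isNilpotent_of_tendsto_zero_of_selfCommutator_flow
    (hA : ∀ t ∈ Ici (0 : ℝ),
      HasDerivWithinAt A (A t * (A t * (A t)ᴴ - (A t)ᴴ * A t)) (Ici 0) t)
    (h : Tendsto A atTop (nhds 0)) : IsNilpotent (A 0) := by
  obtain ⟨r, hr, hdvd⟩ := (A 0).charpoly.exists_eq_pow_rootMultiplicity_mul_and_not_dvd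
    (A 0).charpoly_monic.ne_zero 0
  set m := (A 0).charpoly.rootMultiplicity 0
  rw [map_zero, sub_zero] at hr hdvd
  rw [Polynomial.X_dvd_iff] at hdvd
  have hlim : Tendsto (fun t => (Polynomial.aeval (A t) r).det) atTop
      (nhds (Polynomial.aeval (0 : Matrix (Fin n) (Fin n) ℂ) r).det) :=
    (((Polynomial.continuous_aeval r).matrix_det).tendsto 0).comp h
  have hdet : (Polynomial.aeval (0 : Matrix (Fin n) (Fin n) ℂ) r).det ≠ 0 := by
    rw [← map_zero (algebraMap ℂ (Matrix (Fin n) (Fin n) ℂ)), Polynomial.aeval_algebraMap_apply,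
      Matrix.algebraMap_eq_diagonal, Matrix.det_diagonal]
    rw [Polynomial.coeff_zero_eq_eval_zero] at hdvd
    simp [hdvd]
  obtain ⟨T, hT, hT0⟩ := ((hlim.eventually_ne hdet).and (eventually_ge_atTop 0)).exists
  have hchar := (aeval_eq_zero_iff_of_selfCommutator_flow hA (A 0).charpoly hT0).mpr
    (A 0).aeval_self_charpoly
  rw [hr, map_mul] at hchar
  have hunit : IsUnit (Polynomial.aeval (A T) r) :=
    (Matrix.isUnit_iff_isUnit_det _).mpr (isUnit_iff_ne_zero.mpr hT)
  have hpow := (aeval_eq_zero_iff_of_selfCommutator_flow hA (Polynomial.X ^ m) hT0).mp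
    (hunit.mul_left_eq_zero.mp hchar)
  exact ⟨m, by simpa using hpow⟩

theorem tendsto_zero_of_isNilpotent_of_selfCommutator_flow
    (hA : ∀ t ∈ Ici (0 : ℝ),
      HasDerivWithinAt A (A t * (A t * (A t)ᴴ - (A t)ᴴ * A t)) (Ici 0) t)
    (h : IsNilpotent (A 0)) : Tendsto A atTop (nhds 0) := by
  obtain ⟨k, hk⟩ := h
  have hnil : ∀ t ∈ Ici (0 : ℝ), A t ^ k = 0 := fun t ht => by
    simpa using (aeval_eq_zero_iff_of_selfCommutator_flow hA (Polynomial.X ^ k) ht).mpr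
      (by simpa using hk)
  obtain ⟨c, hc, hle⟩ := Matrix.exists_mul_norm_sq_le_norm_selfCommutator (n := n) k
  have hanti := antitoneOn_norm_sq_of_selfCommutator_flow hA
  have hsmall : ∀ ε > 0, ∃ T ∈ Ici (0 : ℝ), ‖A T‖ ^ 2 < ε := by
    intro ε hε
    by_contra! hbig
    have hlin : AntitoneOn (fun t => ‖A t‖ ^ 2 + t * (c * ε) ^ 2) (Ici 0) := by
      have hd : ∀ t ∈ Ici (0 : ℝ), HasDerivWithinAt (fun t => ‖A t‖ ^ 2 + t * (c * ε) ^ 2)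
          (-‖A t * (A t)ᴴ - (A t)ᴴ * A t‖ ^ 2 + 1 * (c * ε) ^ 2) (Ici 0) t := fun t ht =>
        (hasDerivWithinAt_norm_sq_of_selfCommutator_flow hA ht).add
          ((hasDerivWithinAt_id t _).mul_const _)
      refine antitoneOn_of_hasDerivWithinAt_nonpos (convex_Ici 0)
        (fun t ht => (hd t ht).continuousWithinAt)
        (fun t ht => (hd t (interior_subset ht)).mono interior_subset) fun t ht => ?_
      have ht := interior_subset ht
      have : c * ε ≤ ‖A t * (A t)ᴴ - (A t)ᴴ * A t‖ :=
        (mul_le_mul_of_nonneg_left (hbig t ht) hc.le).trans (hle _ (hnil t ht))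
      have : (c * ε) ^ 2 ≤ ‖A t * (A t)ᴴ - (A t)ᴴ * A t‖ ^ 2 := by gcongr
      linarith
    have hT : (0 : ℝ) ≤ ‖A 0‖ ^ 2 / (c * ε) ^ 2 := by positivity
    have h1 := hlin self_mem_Ici hT hT
    have h2 := hbig _ hT
    simp only [zero_mul, add_zero] at h1
    rw [div_mul_cancel₀ _ (by positivity)] at h1
    linarith
  refine tendsto_zero_iff_norm_tendsto_zero.mpr ?_
  rw [Metric.tendsto_atTop]
  intro ε hε
  obtain ⟨T, hT, hlt⟩ := hsmall (ε ^ 2) (by positivity)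
  refine ⟨T, fun t ht => ?_⟩
  have hle : ‖A t‖ ^ 2 ≤ ‖A T‖ ^ 2 := hanti hT (le_trans hT ht) ht
  rw [dist_zero_right, norm_norm]
  exact lt_of_pow_lt_pow_left₀ 2 hε.le (hle.trans_lt hlt)

end FrobeniusRing

theorem stmt10 {n : ℕ} {A : ℝ → Matrix (Fin n) (Fin n) ℂ}
    (hA : ∀ t ∈ Ici (0 : ℝ),
      HasDerivWithinAt A (A t * (A t * (A t)ᴴ - (A t)ᴴ * A t)) (Ici 0) t) :
    Tendsto A atTop (nhds 0) ↔ IsNilpotent (A 0) :=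
  ⟨isNilpotent_of_tendsto_zero_of_selfCommutator_flow hA,
    tendsto_zero_of_isNilpotent_of_selfCommutator_flow hA⟩
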